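/- Let N ≥ 5 and let x ∈ [0,1]^N with Σ_{i=1}^N x_i = 4. Then f(x) ≤ 72/125, with equality if and only if there exists a 5-element subset {i_1,…,i_5} ⊆ {1,…,N} such that x_{i_j} = 4/5 for j = 1,…,5 and x_i = 0 for all other indices i. -/

import Mathlib

noncomputable section

/-- The functional `f(x) = (1/256)·Σ_{i<j<k} [(xᵢ+xⱼ+xₖ)⁴ − (xᵢ+xⱼ)⁴ − (xᵢ+xₖ)⁴ − (xⱼ+xₖ)⁴
+ xᵢ⁴ + xⱼ⁴ + xₖ⁴]`. -/
noncomputable def volDecF {N : ℕ} (x : Fin N → ℝ) : ℝ :=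
  (1 / 256) * ∑ i : Fin N, ∑ j : Fin N, ∑ k : Fin N,
    if i < j ∧ j < k then
      (x i + x j + x k) ^ 4 - (x i + x j) ^ 4 - (x i + x k) ^ 4 - (x j + x k) ^ 4
        + x i ^ 4 + x j ^ 4 + x k ^ 4
    else 0

lemma pairSum1 : ∀ (N : ℕ) (x : Fin N → ℝ),
    ∑ j : Fin N, ∑ k : Fin N, (if j < k then x j * x k else 0)
      = ((∑ i, x i) ^ 2 - ∑ i, x i ^ 2) / 2 := by
  intro N
  induction N with
  | zero => intro x; simp
  | succ n ih =>
    intro x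
    simp only [Fin.sum_univ_succ, Fin.succ_lt_succ_iff, Fin.succ_pos, Fin.not_lt_zero, lt_irrefl,
      if_true, if_false, zero_add, ih (fun i => x i.succ), ← Finset.mul_sum]
    ring

lemma pairSum2 : ∀ (N : ℕ) (x : Fin N → ℝ),
    ∑ j : Fin N, ∑ k : Fin N, (if j < k then x j * x k * (x j + x k) else 0)
      = (∑ i, x i) * (∑ i, x i ^ 2) - ∑ i, x i ^ 3 := by
  intro N
  induction N with
  | zero => intro x; simp
  | succ n ih =>
    intro x
    have h : ∑ i : Fin n, x 0 * x i.succ * (x 0 + x i.succ)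
        = x 0 ^ 2 * ∑ i : Fin n, x i.succ + x 0 * ∑ i : Fin n, x i.succ ^ 2 := by
      rw [Finset.mul_sum, Finset.mul_sum, ← Finset.sum_add_distrib]
      exact Finset.sum_congr rfl fun i _ => by ring
    simp only [Fin.sum_univ_succ, Fin.succ_lt_succ_iff, Fin.succ_pos, Fin.not_lt_zero, lt_irrefl,
      if_true, if_false, zero_add, ih (fun i => x i.succ), h]
    ring

lemma tripleSum : ∀ (N : ℕ) (x : Fin N → ℝ),
    ∑ i : Fin N, ∑ j : Fin N, ∑ k : Fin N,
      (if i < j ∧ j < k then x i * x j * x k * (x i + x j + x k) else 0)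
      = ((∑ i, x i) ^ 2 * (∑ i, x i ^ 2) - (∑ i, x i ^ 2) ^ 2
          - 2 * (∑ i, x i) * (∑ i, x i ^ 3) + 2 * ∑ i, x i ^ 4) / 2 := by
  intro N
  induction N with
  | zero => intro x; simp
  | succ n ih =>
    intro x
    have h : ∑ j : Fin n, ∑ k : Fin n, (if j < k then
          x 0 * x j.succ * x k.succ * (x 0 + x j.succ + x k.succ) else 0)
        = x 0 ^ 2 * (((∑ i : Fin n, x i.succ) ^ 2 - ∑ i : Fin n, x i.succ ^ 2) / 2)
          + x 0 * ((∑ i : Fin n, x i.succ) * (∑ i : Fin n, x i.succ ^ 2)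
            - ∑ i : Fin n, x i.succ ^ 3) := by
      rw [← pairSum1 n (fun i => x i.succ), ← pairSum2 n (fun i => x i.succ)]
      simp only [Finset.mul_sum, ← Finset.sum_add_distrib]
      refine Finset.sum_congr rfl fun j _ => Finset.sum_congr rfl fun k _ => ?_
      split_ifs <;> ring
    simp only [Fin.sum_univ_succ, Fin.succ_lt_succ_iff, Fin.succ_pos, Fin.not_lt_zero, lt_irrefl,
      if_true, if_false, zero_add, true_and, false_and, and_false, Finset.sum_const_zero,
      ih (fun i => x i.succ), h]
    ring

def gFun {N : ℕ} (x : Fin N → ℝ) : ℝ :=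
  2 * (∑ i, x i ^ 2) - (∑ i, x i ^ 2) ^ 2 / 8 - ∑ i, x i ^ 3 + (∑ i, x i ^ 4) / 4

lemma volDecF_eq {N : ℕ} (x : Fin N → ℝ) (hsum : ∑ i, x i = 4) :
    volDecF x = 3 / 16 * gFun x := by
  have h : volDecF x = (1 / 256) * (12 * ∑ i : Fin N, ∑ j : Fin N, ∑ k : Fin N,
      (if i < j ∧ j < k then x i * x j * x k * (x i + x j + x k) else 0)) := by
    unfold volDecF
    simp only [Finset.mul_sum]
    refine Finset.sum_congr rfl fun i _ => Finset.sum_congr rfl fun j _ =>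
      Finset.sum_congr rfl fun k _ => ?_
    split_ifs <;> ring
  rw [h, tripleSum, hsum, gFun]
  ring

/-- base case: support in a five element set -/
lemma base_case {N : ℕ} (x : Fin N → ℝ) (hx : ∀ i, x i ∈ Set.Icc (0:ℝ) 1)
    (hsum : ∑ i, x i = 4) (s : Finset (Fin N)) (hs : s.card = 5) (hs0 : ∀ i ∉ s, x i = 0) :
    gFun x ≤ 384 / 125 ∧ (gFun x = 384 / 125 → ∀ i, x i = 0 ∨ x i = 4 / 5) := by
  have hS : ∀ n : ℕ, n ≠ 0 → ∑ i, x i ^ n = ∑ i ∈ s, x i ^ n := by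
    intro n hn
    symm
    apply Finset.sum_subset (Finset.subset_univ s)
    intro i _ hi
    rw [hs0 i hi, zero_pow hn]
  have h1 : ∑ i ∈ s, x i = 4 := by
    have := hS 1 one_ne_zero
    simp only [pow_one] at this
    rw [← this, hsum]
  set q2 := ∑ i ∈ s, (1 - x i) ^ 2 with hq2
  set q3 := ∑ i ∈ s, (1 - x i) ^ 3 with hq3
  set q4 := ∑ i ∈ s, (1 - x i) ^ 4 with hq4
  have e2 : q2 = 5 - 2 * 4 + ∑ i ∈ s, x i ^ 2 := by
    have : q2 = ∑ i ∈ s, (1 - 2 * x i + x i ^ 2) :=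
      Finset.sum_congr rfl fun i _ => by ring
    rw [this]
    simp only [Finset.sum_add_distrib, Finset.sum_sub_distrib, ← Finset.mul_sum, h1,
      Finset.sum_const, hs]
    norm_num
  have e3 : q3 = 5 - 3 * 4 + 3 * ∑ i ∈ s, x i ^ 2 - ∑ i ∈ s, x i ^ 3 := by
    have : q3 = ∑ i ∈ s, (1 - 3 * x i + 3 * x i ^ 2 - x i ^ 3) :=
      Finset.sum_congr rfl fun i _ => by ring
    rw [this]
    simp only [Finset.sum_add_distrib, Finset.sum_sub_distrib, ← Finset.mul_sum, h1,
      Finset.sum_const, hs]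
    norm_num
  have e4 : q4 = 5 - 4 * 4 + 6 * ∑ i ∈ s, x i ^ 2 - 4 * ∑ i ∈ s, x i ^ 3 + ∑ i ∈ s, x i ^ 4 := by
    have : q4 = ∑ i ∈ s, (1 - 4 * x i + 6 * x i ^ 2 - 4 * x i ^ 3 + x i ^ 4) :=
      Finset.sum_congr rfl fun i _ => by ring
    rw [this]
    simp only [Finset.sum_add_distrib, Finset.sum_sub_distrib, ← Finset.mul_sum, h1,
      Finset.sum_const, hs]
    norm_num
  have hg : gFun x = 3 + (1 - 2 * q2 - q2 ^ 2 + 2 * q4) / 8 := by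
    have a2 : ∑ i ∈ s, x i ^ 2 = q2 + 3 := by linarith
    have a3 : ∑ i ∈ s, x i ^ 3 = 2 + 3 * q2 - q3 := by linarith
    have a4 : ∑ i ∈ s, x i ^ 4 = 1 + 6 * q2 - 4 * q3 + q4 := by linarith
    rw [gFun, hS 2 (by norm_num), hS 3 (by norm_num), hS 4 (by norm_num), a2, a3, a4]
    ring
  by_cases hbig : ∃ i ∈ s, x i < 3 / 20
  · obtain ⟨i, his, hi⟩ := hbig
    have hw : (1 - x i) ^ 2 ≤ q2 :=
      Finset.single_le_sum (f := fun i => (1 - x i) ^ 2) (fun j _ => sq_nonneg _) his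
    have hq2' : 289 / 400 ≤ q2 := by nlinarith
    have hq2u : q2 ≤ 1 := by
      have h5 : ∑ i ∈ s, (1 - x i) = 1 := by
        rw [Finset.sum_sub_distrib, h1, Finset.sum_const, hs]; norm_num
      rw [← h5]
      apply Finset.sum_le_sum
      intro j _
      have := hx j
      nlinarith [this.1, this.2]
    have hq4' : q4 ≤ q2 ^ 2 := by
      have : q4 = ∑ i ∈ s, ((1 - x i) ^ 2) ^ 2 := Finset.sum_congr rfl fun i _ => by ring
      rw [this]
      exact Finset.sum_sq_le_sq_sum_of_nonneg fun j _ => sq_nonneg _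
    have : gFun x < 384 / 125 := by rw [hg]; nlinarith
    exact ⟨this.le, fun h => absurd h this.ne⟩
  · push Not at hbig
    have key : gFun x = 384 / 125 - (q2 - 1 / 5) ^ 2 / 8
        - (∑ i ∈ s, (4 / 5 - x i) ^ 2 *
          (54 / 25 - 4 / 5 * (1 - x i) - 2 * (1 - x i) ^ 2)) / 8 := by
      have : ∑ i ∈ s, (4 / 5 - x i) ^ 2 *
          (54 / 25 - 4 / 5 * (1 - x i) - 2 * (1 - x i) ^ 2)
          = ∑ i ∈ s, (- 2 * (1 - x i) ^ 4 + 12 / 5 * (1 - x i) ^ 2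
            - 112 / 125 * (1 - x i) + 54 / 625) :=
        Finset.sum_congr rfl fun i _ => by ring
      rw [this, hg]
      simp only [Finset.sum_add_distrib, Finset.sum_sub_distrib, ← Finset.mul_sum, h1,
        Finset.sum_const, hs, ← hq2, ← hq4]
      norm_num
      ring
    have hpos : ∀ i ∈ s, 0 < 54 / 25 - 4 / 5 * (1 - x i) - 2 * (1 - x i) ^ 2 := by
      intro i hi
      have := hbig i hi
      nlinarith [(hx i).2]
    have hnn : ∀ i ∈ s, 0 ≤ (4 / 5 - x i) ^ 2 *
          (54 / 25 - 4 / 5 * (1 - x i) - 2 * (1 - x i) ^ 2) :=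
      fun i hi => mul_nonneg (sq_nonneg _) (hpos i hi).le
    have hT := Finset.sum_nonneg hnn
    refine ⟨by rw [key]; nlinarith [sq_nonneg (q2 - 1 / 5)], ?_⟩
    intro h i
    by_cases his : i ∈ s
    · right
      have hz : ∑ i ∈ s, (4 / 5 - x i) ^ 2 *
          (54 / 25 - 4 / 5 * (1 - x i) - 2 * (1 - x i) ^ 2) = 0 := by
        nlinarith [sq_nonneg (q2 - 1 / 5)]
      have := (Finset.sum_eq_zero_iff_of_nonneg hnn).1 hz i his
      rcases mul_eq_zero.1 this with h' | h'
      · have := pow_eq_zero_iff (two_ne_zero) |>.1 h'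
        linarith
      · exact absurd h' (hpos i his).ne'
    · exact Or.inl (hs0 i his)

/-- changing two coordinates -/
lemma change_two {N : ℕ} (x y : Fin N → ℝ) (i j : Fin N) (hij : i ≠ j)
    (hy : ∀ k, k ≠ i → k ≠ j → y k = x k) (hs : y i + y j = x i + x j)
    (hsum : ∑ k, x k = 4) (R : ℝ) (hR : R = ∑ k ∈ Finset.univ \ {i, j}, x k ^ 2) :
    ∑ k, y k = 4 ∧ gFun x - gFun y = (x i * x j - y i * y j) *
      ((4 - (x i + x j)) - ((4 - (x i + x j)) ^ 2 - R) / 2) := by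
  have split : ∀ f : Fin N → ℝ, ∑ k, f k = ∑ k ∈ Finset.univ \ {i, j}, f k + (f i + f j) := by
    intro f
    rw [← Finset.sum_sdiff (Finset.subset_univ {i, j}), Finset.sum_pair hij]
  have same : ∀ n : ℕ, ∑ k ∈ Finset.univ \ {i, j}, y k ^ n
      = ∑ k ∈ Finset.univ \ {i, j}, x k ^ n := by
    intro n
    refine Finset.sum_congr rfl fun k hk => ?_
    simp at hk
    rw [hy k hk.1 hk.2]
  constructor
  · have := same 1
    simp only [pow_one] at this
    rw [split] at hsum ⊢
    linarith
  · unfold gFun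
    simp only [split (fun k => x k ^ _), split (fun k => y k ^ _), same, ← hR]
    have hyj : y j = x i + x j - y i := by linarith
    rw [hyj]
    ring

lemma main_bound {N : ℕ} (hN : 5 ≤ N) : ∀ (m : ℕ) (x : Fin N → ℝ),
    (∀ i, x i ∈ Set.Icc (0:ℝ) 1) → ∑ i, x i = 4 →
    (Finset.univ.filter fun i => 0 < x i ∧ x i < 1).card = m →
    gFun x ≤ 384 / 125 ∧ (gFun x = 384 / 125 → ∀ i, x i = 0 ∨ x i = 4 / 5) := by
  intro m
  induction m using Nat.strong_induction_on with
  | _ m ih =>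
  intro x hx hsum hm
  set S := Finset.univ.filter fun i => x i ≠ 0 with hSdef
  have memS : ∀ k, k ∈ S ↔ x k ≠ 0 := by intro k; simp [hSdef]
  by_cases hS : S.card ≤ 5
  · obtain ⟨s, hSs, hs⟩ := Finset.exists_superset_card_eq hS (by simpa using hN)
    refine base_case x hx hsum s hs fun i hi => ?_
    by_contra h
    exact hi (hSs ((memS i).2 h))
  push Not at hS
  obtain ⟨i, hiS, hi⟩ := Finset.exists_min_image S x (Finset.card_pos.1 (by omega))
  have hc1 : (S.erase i).card = S.card - 1 := Finset.card_erase_of_mem hiS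
  obtain ⟨j, hjS, hj⟩ := Finset.exists_min_image (S.erase i) x (Finset.card_pos.1 (by omega))
  have hc2 : ((S.erase i).erase j).card = S.card - 1 - 1 := by
    rw [Finset.card_erase_of_mem hjS, hc1]
  have hji : j ≠ i := Finset.ne_of_mem_erase hjS
  have hij : i ≠ j := hji.symm
  have hjS' := Finset.mem_of_mem_erase hjS
  have hxij : x i ≤ x j := hi j hjS'
  have hi0 : 0 < x i := lt_of_le_of_ne (hx i).1 (Ne.symm ((memS i).1 hiS))
  have hj0 : 0 < x j := lt_of_lt_of_le hi0 hxij
  set T := (S.erase i).erase j with hT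
  have hT4 : (4:ℝ) ≤ (T.card : ℝ) := by
    have : 4 ≤ T.card := by omega
    exact_mod_cast this
  have hTsub : T ⊆ Finset.univ \ {i, j} := by
    intro k hk
    simp [hT] at hk
    simp [hk.1, hk.2.1]
  have hTz : ∀ k ∈ Finset.univ \ {i, j}, k ∉ T → x k = 0 := by
    intro k hk hkT
    simp at hk
    by_contra h
    apply hkT
    simp [hT, hk.1, hk.2, memS, h]
  have hT1 : ∑ k ∈ T, x k = 4 - (x i + x j) := by
    rw [Finset.sum_subset hTsub hTz]
    rw [← Finset.sum_sdiff (Finset.subset_univ {i, j}), Finset.sum_pair hij] at hsum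
    linarith
  have hTge : ∀ k ∈ T, x j ≤ x k := fun k hk => hj k (Finset.mem_of_mem_erase hk)
  have hcard : (T.card : ℝ) * x j ≤ 4 - (x i + x j) := by
    rw [← hT1]
    have := Finset.card_nsmul_le_sum T x (x j) hTge
    simpa using this
  obtain ⟨R, hR⟩ : ∃ R, R = ∑ k ∈ Finset.univ \ {i, j}, x k ^ 2 := ⟨_, rfl⟩
  have hRT : R = ∑ k ∈ T, x k ^ 2 := by
    rw [hR]
    symm
    apply Finset.sum_subset hTsub
    intro k hk hkT
    rw [hTz k hk hkT]; norm_num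
  obtain ⟨W, hW⟩ : ∃ W, W = x i + x j := ⟨_, rfl⟩
  have hW0 : 0 < W := by linarith
  have h4j : 4 * x j ≤ 4 - W := by nlinarith
  have hj1 : x j < 1 := by linarith
  have hi1 : x i < 1 := by linarith
  have hW43 : W ≤ 4 / 3 := by linarith
  have hRle : R ≤ (1 + W / 2) * (4 - W) - 2 * W := by
    have h0 : 0 ≤ ∑ k ∈ T, (1 - x k) * (x k - W / 2) := by
      apply Finset.sum_nonneg
      intro k hk
      apply mul_nonneg
      · linarith [(hx k).2]
      · linarith [hTge k hk]
    have h1 : ∑ k ∈ T, (1 - x k) * (x k - W / 2)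
        = ∑ k ∈ T, ((1 + W / 2) * x k - x k ^ 2 - W / 2) :=
      Finset.sum_congr rfl fun k _ => by ring
    rw [h1] at h0
    simp only [Finset.sum_sub_distrib, ← Finset.mul_sum, hT1, Finset.sum_const, ← hRT,
      nsmul_eq_mul, ← hW] at h0
    nlinarith
  have hD : (4 - W) - ((4 - W) ^ 2 - R) / 2 ≤ 0 := by
    nlinarith [mul_nonneg (sub_nonneg.2 hW43) (by linarith : (0:ℝ) ≤ 2 - W)]
  by_cases hW1 : W ≤ 1
  · have hD' : (4 - W) - ((4 - W) ^ 2 - R) / 2 < 0 := by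
      nlinarith [mul_pos (by linarith : (0:ℝ) < 4 / 3 - W) (by linarith : (0:ℝ) < 2 - W)]
    set y : Fin N → ℝ := Function.update (Function.update x i W) j 0 with hy
    have yi : y i = W := by simp [hy, hij]
    have yj : y j = 0 := by simp [hy]
    have yk : ∀ k, k ≠ i → k ≠ j → y k = x k := by
      intro k h1 h2; simp [hy, h1, h2]
    obtain ⟨hys, hgd⟩ := change_two x y i j hij yk (by rw [yi, yj, hW]; ring) hsum R hR
    have hyI : ∀ k, y k ∈ Set.Icc (0:ℝ) 1 := by
      intro k
      by_cases h1 : k = i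
      · rw [h1, yi]; exact ⟨hW0.le, hW1⟩
      by_cases h2 : k = j
      · rw [h2, yj]; norm_num
      rw [yk k h1 h2]; exact hx k
    have hlt : (Finset.univ.filter fun k => 0 < y k ∧ y k < 1).card < m := by
      rw [← hm]
      apply Finset.card_lt_card
      rw [Finset.ssubset_iff_of_subset]
      · exact ⟨j, by simp [hj0, hj1], by simp [yj]⟩
      · intro k hk
        simp only [Finset.mem_filter, Finset.mem_univ, true_and] at hk ⊢
        by_cases h1 : k = i
        · rw [h1]; exact ⟨hi0, hi1⟩
        by_cases h2 : k = j
        · rw [h2]; exact ⟨hj0, hj1⟩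
        rwa [yk k h1 h2] at hk
    have hrec := (ih _ hlt y hyI hys rfl).1
    have : gFun x < 384 / 125 := by
      rw [yi, yj, ← hW] at hgd
      nlinarith [mul_pos (mul_pos hi0 hj0) (neg_pos.2 hD')]
    exact ⟨this.le, fun h => absurd h this.ne⟩
  · push Not at hW1
    set y : Fin N → ℝ := Function.update (Function.update x i 1) j (W - 1) with hy
    have yi : y i = 1 := by simp [hy, hij]
    have yj : y j = W - 1 := by simp [hy]
    have yk : ∀ k, k ≠ i → k ≠ j → y k = x k := by
      intro k h1 h2; simp [hy, h1, h2]
    obtain ⟨hys, hgd⟩ := change_two x y i j hij yk (by rw [yi, yj, hW]; ring) hsum R hR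
    have hyI : ∀ k, y k ∈ Set.Icc (0:ℝ) 1 := by
      intro k
      by_cases h1 : k = i
      · rw [h1, yi]; norm_num
      by_cases h2 : k = j
      · rw [h2, yj]; constructor <;> linarith
      rw [yk k h1 h2]; exact hx k
    have hlt : (Finset.univ.filter fun k => 0 < y k ∧ y k < 1).card < m := by
      rw [← hm]
      apply Finset.card_lt_card
      rw [Finset.ssubset_iff_of_subset]
      · exact ⟨i, by simp [hi0, hi1], by simp [yi]⟩
      · intro k hk
        simp only [Finset.mem_filter, Finset.mem_univ, true_and] at hk ⊢
        by_cases h1 : k = i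
        · rw [h1]; exact ⟨hi0, hi1⟩
        by_cases h2 : k = j
        · rw [h2]; exact ⟨hj0, hj1⟩
        rwa [yk k h1 h2] at hk
    obtain ⟨hrec, heq⟩ := ih _ hlt y hyI hys rfl
    have hlt' : gFun y < 384 / 125 := by
      refine lt_of_le_of_ne hrec fun h => ?_
      rcases heq h i with h | h <;> rw [yi] at h <;> norm_num at h
    have : gFun x < 384 / 125 := by
      rw [yi, yj, ← hW] at hgd
      have hq : 0 ≤ x i * x j - 1 * (W - 1) := by
        rw [hW]; nlinarith [mul_pos (sub_pos.2 hi1) (sub_pos.2 hj1)]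
      nlinarith [mul_nonneg hq (neg_nonneg.2 hD)]
    exact ⟨this.le, fun h => absurd h this.ne⟩

theorem statement19 {N : ℕ} (hN : 5 ≤ N) (x : Fin N → ℝ)
    (hx : ∀ i, x i ∈ Set.Icc (0:ℝ) 1) (hsum : ∑ i, x i = 4) :
    volDecF x ≤ 72 / 125 ∧
    (volDecF x = 72 / 125 ↔
      ∃ s : Finset (Fin N), s.card = 5 ∧ (∀ i ∈ s, x i = 4 / 5) ∧ ∀ i ∉ s, x i = 0) := by
  obtain ⟨hle, heq⟩ := main_bound hN _ x hx hsum rfl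
  rw [volDecF_eq x hsum]
  refine ⟨by linarith, ?_, ?_⟩
  · intro h
    have h' := heq (by linarith)
    set s := Finset.univ.filter fun i => x i = 4 / 5 with hs
    have hin : ∀ i ∈ s, x i = 4 / 5 := by intro i hi; simpa [hs] using hi
    have hout : ∀ i ∉ s, x i = 0 := by
      intro i hi
      exact (h' i).resolve_right (by simpa [hs] using hi)
    refine ⟨s, ?_, hin, hout⟩
    have h1 : ∑ i ∈ s, x i = 4 := by
      rw [← hsum]
      exact Finset.sum_subset (Finset.subset_univ s) fun i _ hi => hout i hi
    rw [Finset.sum_congr rfl hin, Finset.sum_const, nsmul_eq_mul] at h1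
    have : (s.card : ℝ) = 5 := by linarith
    exact_mod_cast this
  · rintro ⟨s, hs, hin, hout⟩
    have hS : ∀ n : ℕ, n ≠ 0 → ∑ i, x i ^ n = 5 * (4 / 5 : ℝ) ^ n := by
      intro n hn
      have : ∑ i ∈ s, x i ^ n = ∑ i, x i ^ n := by
        apply Finset.sum_subset (Finset.subset_univ s)
        intro i _ hi
        rw [hout i hi, zero_pow hn]
      rw [← this, Finset.sum_congr rfl (fun i hi => by rw [hin i hi]), Finset.sum_const, hs]
      norm_num
    rw [gFun, hS 2 (by norm_num), hS 3 (by norm_num), hS 4 (by norm_num)]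
    norm_num

end
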